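/- Let d ≥ 1 and let U be a d×d unitary complex matrix. Set A₁ = i(U − I) and A₂ = U + I. Then for every nonzero real number k, the matrix A₁ − i k A₂ is invertible, and the matrix Θ(k) = (A₁ − i k A₂)⁻¹ (A₁ + i k A₂) is unitary. -/

import Mathlib

/-- For a unitary matrix `U ∈ M_d(ℂ)` with `A₁ = i(U − I)`, `A₂ = U + I`,
for every nonzero real `k` the matrix `A₁ − i k A₂` is invertible and
`Θ(k) = (A₁ − i k A₂)⁻¹ (A₁ + i k A₂)` is unitary. -/
theorem theta_unitary_of_real
    (d : ℕ) (hd : 1 ≤ d)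
    (U : Matrix (Fin d) (Fin d) ℂ) (hU : U ∈ Matrix.unitaryGroup (Fin d) ℂ)
    (A₁ A₂ : Matrix (Fin d) (Fin d) ℂ)
    (hA₁ : A₁ = Complex.I • (U - 1)) (hA₂ : A₂ = U + 1)
    (k : ℝ) (hk : k ≠ 0) :
    IsUnit (A₁ - (Complex.I * (k : ℂ)) • A₂) ∧
    (A₁ - (Complex.I * (k : ℂ)) • A₂)⁻¹ * (A₁ + (Complex.I * (k : ℂ)) • A₂) ∈
      Matrix.unitaryGroup (Fin d) ℂ := by
  have h1 : U * star U = 1 := Matrix.mem_unitaryGroup_iff.mp hU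
  have h2 : star U * U = 1 := Matrix.mem_unitaryGroup_iff'.mp hU
  have hI : Complex.I ≠ 0 := Complex.I_ne_zero
  have hM : A₁ - (Complex.I * (k : ℂ)) • A₂
      = Complex.I • ((1 - (k : ℂ)) • U - (1 + (k : ℂ)) • (1 : Matrix (Fin d) (Fin d) ℂ)) := by
    rw [hA₁, hA₂]; module
  have hN : A₁ + (Complex.I * (k : ℂ)) • A₂
      = Complex.I • ((1 + (k : ℂ)) • U - (1 - (k : ℂ)) • (1 : Matrix (Fin d) (Fin d) ℂ)) := by
    rw [hA₁, hA₂]; module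
  have key : (A₁ - (Complex.I * (k : ℂ)) • A₂) * star (A₁ - (Complex.I * (k : ℂ)) • A₂)
      = (A₁ + (Complex.I * (k : ℂ)) • A₂) * star (A₁ + (Complex.I * (k : ℂ)) • A₂) := by
    rw [hM, hN]
    simp only [star_smul, star_sub, star_one, star_add, RCLike.star_def, Complex.conj_I,
      Complex.conj_ofReal, map_sub, map_add, map_one, smul_mul_assoc, mul_smul_comm, sub_mul,
      mul_sub, h1, mul_one, one_mul]
    module
  have hu : IsUnit (A₁ - (Complex.I * (k : ℂ)) • A₂) := by
    rw [← Matrix.mulVec_injective_iff_isUnit]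
    rw [← Matrix.coe_mulVecLin, injective_iff_map_eq_zero]
    intro v hv
    rw [Matrix.mulVecLin_apply, hM, Matrix.smul_mulVec, smul_eq_zero] at hv
    have hv := hv.resolve_left hI
    rw [Matrix.sub_mulVec, Matrix.smul_mulVec, Matrix.smul_mulVec, Matrix.one_mulVec,
      sub_eq_zero] at hv
    have hU' : star (U.mulVec v) ⬝ᵥ (U.mulVec v) = star v ⬝ᵥ v := by
      rw [Matrix.star_mulVec, Matrix.dotProduct_mulVec, Matrix.vecMul_vecMul,
        ← Matrix.star_eq_conjTranspose, h2, Matrix.vecMul_one]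
    have hd := congrArg (fun w => star w ⬝ᵥ w) hv
    simp only [star_smul, smul_dotProduct, dotProduct_smul, hU', smul_eq_mul, RCLike.star_def,
      map_sub, map_add, map_one, Complex.conj_ofReal] at hd
    have hk' : (k : ℂ) ≠ 0 := by exact_mod_cast hk
    have h0 : (k : ℂ) * (star v ⬝ᵥ v) = 0 := by linear_combination (-1/4) * hd
    open scoped ComplexOrder in
    exact dotProduct_star_self_eq_zero.mp ((mul_eq_zero.mp h0).resolve_left hk')
  refine ⟨hu, ?_⟩
  generalize A₁ - (Complex.I * (k : ℂ)) • A₂ = M at *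
  generalize A₁ + (Complex.I * (k : ℂ)) • A₂ = N at *
  have hdet : IsUnit M.det := (Matrix.isUnit_iff_isUnit_det M).mp hu
  rw [Matrix.mem_unitaryGroup_iff, star_mul]
  calc M⁻¹ * N * (star N * star M⁻¹) = M⁻¹ * (N * star N) * star M⁻¹ := by
        simp only [mul_assoc]
    _ = (M⁻¹ * M) * star (M⁻¹ * M) := by rw [← key, star_mul]; simp only [mul_assoc]
    _ = 1 := by rw [Matrix.nonsing_inv_mul M hdet]; simp
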